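/- Let M be a horizontally linked R-module of finite G-dimension. Then rgr(M) = inf{ depth_{R_p}((λM)_p) : p ∈ Spec R, Gdim_{R_p}(M_p) ≠ 0 }. -/

import Mathlib

open CategoryTheory

noncomputable section

universe u

/-- The `i`-th Ext group `Ext^i_R(M,N)`, as a type (with its `R`-module structure). -/
abbrev extM (R : Type u) [CommRing R] (i : ℕ) (M N : Type u) [AddCommGroup M] [Module R M]
    [AddCommGroup N] [Module R N] : Type u :=
  ((Ext R (ModuleCat.{u} R) i).obj (Opposite.op (ModuleCat.of R M))).obj (ModuleCat.of R N)

/-- The `i`-th Tor group `Tor^R_i(M,N)`, as a type. -/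
abbrev torM (R : Type u) [CommRing R] (i : ℕ) (M N : Type u) [AddCommGroup M] [Module R M]
    [AddCommGroup N] [Module R N] : Type u :=
  ((Tor (ModuleCat.{u} R) i).obj (ModuleCat.of R M)).obj (ModuleCat.of R N)

/-- The `i`-th local cohomology `H^i_I(M)`, as a type. -/
abbrev locCoh (R : Type u) [CommRing R] (I : Ideal R) (i : ℕ) (M : Type u) [AddCommGroup M]
    [Module R M] : Type u :=
  (localCohomology I i).obj (ModuleCat.of R M)

/-- A submodule `N ≤ M` is superfluous if `K ⊔ N = ⊤` implies `K = ⊤`. -/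
def Submodule.IsSuperfluous {R M : Type u} [CommRing R] [AddCommGroup M] [Module R M]
    (N : Submodule R M) : Prop :=
  ∀ K : Submodule R M, K ⊔ N = ⊤ → K = ⊤

/-- A minimal projective resolution of `M` by finitely generated projective modules:
each `P i → Ω^i M` is a projective cover (i.e. has superfluous kernel). -/
structure MinRes (R : Type u) [CommRing R] (M : Type u) [AddCommGroup M] [Module R M] where
  P : ℕ → ModuleCat.{u} R
  projective : ∀ i, Module.Projective R (P i)
  finite : ∀ i, Module.Finite R (P i)
  d : (i : ℕ) → (↥(P (i + 1)) →ₗ[R] ↥(P i))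
  ε : ↥(P 0) →ₗ[R] M
  surj : Function.Surjective ε
  exact0 : LinearMap.range (d 0) = LinearMap.ker ε
  exact : ∀ i, LinearMap.range (d (i + 1)) = LinearMap.ker (d i)
  min_eps : (LinearMap.ker ε).IsSuperfluous
  min_d : ∀ i, (LinearMap.ker (d i)).IsSuperfluous

namespace MinRes

variable {R M : Type u} [CommRing R] [AddCommGroup M] [Module R M]

/-- `T k F` is the Auslander-Bridger transpose `𝒯_{k+1} M = Tr Ω^k M`, computed as the
cokernel of `P_k* → P_{k+1}*`. -/
def T (F : MinRes R M) (k : ℕ) : Type u :=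
  (Module.Dual R ↥(F.P (k + 1))) ⧸ LinearMap.range (F.d k).dualMap

instance (F : MinRes R M) (k : ℕ) : AddCommGroup (F.T k) :=
  inferInstanceAs (AddCommGroup ((Module.Dual R ↥(F.P (k + 1))) ⧸
    LinearMap.range (F.d k).dualMap))

instance (F : MinRes R M) (k : ℕ) : Module R (F.T k) :=
  inferInstanceAs (Module R ((Module.Dual R ↥(F.P (k + 1))) ⧸
    LinearMap.range (F.d k).dualMap))

/-- The transpose `Tr M = coker(P₀* → P₁*)` computed from a minimal projective presentation. -/
abbrev Tr (F : MinRes R M) : Type u := F.T 0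

/-- `λM = ΩTr M`, realized as the image of `P₀* → P₁*` for a minimal projective
presentation `P₁ → P₀ → M → 0`. -/
def lambdaMod (F : MinRes R M) : Type u :=
  ↥(LinearMap.range (F.d 0).dualMap)

instance (F : MinRes R M) : AddCommGroup F.lambdaMod :=
  inferInstanceAs (AddCommGroup ↥(LinearMap.range (F.d 0).dualMap))

instance (F : MinRes R M) : Module R F.lambdaMod :=
  inferInstanceAs (Module R ↥(LinearMap.range (F.d 0).dualMap))

end MinRes

/-- `M` is a horizontally linked `R`-module, i.e. `M ≅ λλM`. -/
def IsHorizontallyLinked (R : Type u) [CommRing R] (M : Type u) [AddCommGroup M]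
    [Module R M] : Prop :=
  ∃ (F : MinRes R M) (G : MinRes R F.lambdaMod), Nonempty (G.lambdaMod ≃ₗ[R] M)

/-- `M` and `N` are horizontally linked to each other: `M ≅ λN` and `N ≅ λM`. -/
def MutuallyLinked (A : Type u) [CommRing A] (M N : Type u) [AddCommGroup M] [Module A M]
    [AddCommGroup N] [Module A N] : Prop :=
  ∃ (F : MinRes A M) (G : MinRes A N),
    Nonempty (F.lambdaMod ≃ₗ[A] N) ∧ Nonempty (G.lambdaMod ≃ₗ[A] M)

/-- `M` is linked to `N` by the ideal `c`: `c` annihilates both modules and they are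
horizontally linked to each other as `R ⧸ c`-modules. -/
def LinkedBy (R : Type u) [CommRing R] (c : Ideal R) (M N : Type u) [AddCommGroup M]
    [Module R M] [AddCommGroup N] [Module R N] : Prop :=
  ∃ (hM : Module.IsTorsionBySet R M c) (hN : Module.IsTorsionBySet R N c),
    letI := hM.module
    letI := hN.module
    MutuallyLinked (R ⧸ c) M N

/-- A stable module: no nonzero projective direct summand. -/
def IsStableModule (R : Type u) [CommRing R] (M : Type u) [AddCommGroup M] [Module R M] : Prop :=
  ∀ N : Submodule R M, Module.Projective R ↥N → (∃ N' : Submodule R M, IsCompl N N') → N = ⊥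

/-- `M` has G-dimension zero: `M` is finitely generated and reflexive,
and `Ext^i(M,R) = 0 = Ext^i(M*,R)` for all `i > 0`. -/
def IsGDimZero (R : Type u) [CommRing R] (M : Type u) [AddCommGroup M] [Module R M] : Prop :=
  Module.Finite R M ∧ Function.Bijective (Module.Dual.eval R M) ∧
    (∀ i : ℕ, 0 < i → Subsingleton (extM R i M R)) ∧
    (∀ i : ℕ, 0 < i → Subsingleton (extM R i (Module.Dual R M) R))

/-- `M` admits a resolution of length `≤ n` by modules of G-dimension zero. -/
def GDimLE (R : Type u) [CommRing R] : ℕ → ModuleCat.{u} R → Prop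
  | 0, M => IsGDimZero R ↥M
  | n + 1, M =>
    ∃ (G : ModuleCat.{u} R) (f : ↥G →ₗ[R] ↥M), IsGDimZero R ↥G ∧ Function.Surjective f ∧
      GDimLE R n (ModuleCat.of R ↥(LinearMap.ker f))

/-- The G-dimension of `M`: the minimal length of a resolution of `M` by modules of
G-dimension zero (`∞` if there is none). -/
def GDim (R : Type u) [CommRing R] (M : Type u) [AddCommGroup M] [Module R M] : ℕ∞ :=
  sInf {n : ℕ∞ | ∃ k : ℕ, n = k ∧ GDimLE R k (ModuleCat.of R M)}

/-- The reduced grade of `M`: `rgr M = inf{ i > 0 | Ext^i(M,R) ≠ 0 }`. -/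
def rgr (R : Type u) [CommRing R] (M : Type u) [AddCommGroup M] [Module R M] : ℕ∞ :=
  sInf {n : ℕ∞ | ∃ k : ℕ, n = k ∧ 0 < k ∧ ¬ Subsingleton (extM R k M R)}

/-- The grade of `M`: `gr M = inf{ i ≥ 0 | Ext^i(M,R) ≠ 0 }`. -/
def egrade (R : Type u) [CommRing R] (M : Type u) [AddCommGroup M] [Module R M] : ℕ∞ :=
  sInf {n : ℕ∞ | ∃ k : ℕ, n = k ∧ ¬ Subsingleton (extM R k M R)}

/-- `depth_I(M) = inf{ i | Ext^i(R/I, M) ≠ 0 }`; for `I` the maximal ideal of a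
local ring this is the depth of `M`. -/
def edepth (R : Type u) [CommRing R] (I : Ideal R) (M : Type u) [AddCommGroup M]
    [Module R M] : ℕ∞ :=
  sInf {n : ℕ∞ | ∃ k : ℕ, n = k ∧ ¬ Subsingleton (extM R k (R ⧸ I) M)}

/-- The depth of the local ring `R`. -/
def rdepth (R : Type u) [CommRing R] [IsLocalRing R] : ℕ∞ :=
  edepth R (IsLocalRing.maximalIdeal R) R

/-- `depth_{R_p}(M_p)`. -/
def locDepth (R : Type u) [CommRing R] (p : Ideal R) [p.IsPrime] (M : Type u) [AddCommGroup M]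
    [Module R M] : ℕ∞ :=
  edepth (Localization.AtPrime p) (IsLocalRing.maximalIdeal (Localization.AtPrime p))
    (LocalizedModule p.primeCompl M)

/-- `depth R_p`. -/
def locRingDepth (R : Type u) [CommRing R] (p : Ideal R) [p.IsPrime] : ℕ∞ :=
  rdepth (Localization.AtPrime p)

/-- `Gdim_{R_p}(M_p)`. -/
def locGDim (R : Type u) [CommRing R] (p : Ideal R) [p.IsPrime] (M : Type u) [AddCommGroup M]
    [Module R M] : ℕ∞ :=
  GDim (Localization.AtPrime p) (LocalizedModule p.primeCompl M)

/-- `rgr_{R_p}(M_p)`. -/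
def locRgr (R : Type u) [CommRing R] (p : Ideal R) [p.IsPrime] (M : Type u) [AddCommGroup M]
    [Module R M] : ℕ∞ :=
  rgr (Localization.AtPrime p) (LocalizedModule p.primeCompl M)

/-- `dim_{R_p}(M_p)`, the Krull dimension of the support of `M_p` over `R_p`. -/
def locDim (R : Type u) [CommRing R] (p : Ideal R) [p.IsPrime] (M : Type u) [AddCommGroup M]
    [Module R M] : WithBot ℕ∞ :=
  ringKrullDim ((Localization.AtPrime p) ⧸
    Module.annihilator (Localization.AtPrime p) (LocalizedModule p.primeCompl M))

/-- `M` satisfies the condition `S̃_k`: `depth_{R_p}(M_p) ≥ min{k, depth R_p}` for all primes. -/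
def Stilde (R : Type u) [CommRing R] (k : ℕ) (M : Type u) [AddCommGroup M] [Module R M] : Prop :=
  ∀ (p : Ideal R) (_ : p.IsPrime), min (k : ℕ∞) (locRingDepth R p) ≤ locDepth R p M

/-- `M` satisfies Serre's condition `(S_k)`:
`depth_{R_p}(M_p) ≥ min{k, dim_{R_p}(M_p)}` for all primes. -/
def SerreS (R : Type u) [CommRing R] (k : ℕ) (M : Type u) [AddCommGroup M] [Module R M] : Prop :=
  ∀ (p : Ideal R) (_ : p.IsPrime),
    min (k : WithBot ℕ∞) (locDim R p M) ≤ (locDepth R p M : WithBot ℕ∞)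

/-- `M` is a `k`-th syzygy module. -/
def IsKthSyzygy (R : Type u) [CommRing R] : ℕ → ModuleCat.{u} R → Prop
  | 0, _ => True
  | k + 1, M =>
    ∃ (P : ModuleCat.{u} R) (f : ↥M →ₗ[R] ↥P), Module.Projective R ↥P ∧ Module.Finite R ↥P ∧
      Function.Injective f ∧ IsKthSyzygy R k (ModuleCat.of R (↥P ⧸ LinearMap.range f))

/-- The `I`-torsion submodule `Γ_I(M) = { x | I^n x = 0 for some n }`. -/
def gammaTorsion (R : Type u) [CommRing R] (I : Ideal R) (M : Type u) [AddCommGroup M]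
    [Module R M] : Submodule R M where
  carrier := {x | ∃ n : ℕ, ∀ a ∈ I ^ n, a • x = 0}
  zero_mem' := ⟨0, fun a _ => smul_zero a⟩
  add_mem' := by
    rintro x y ⟨n, hn⟩ ⟨m, hm⟩
    exact ⟨n + m, fun a ha => by
      rw [smul_add, hn a (Ideal.pow_le_pow_right (Nat.le_add_right n m) ha),
        hm a (Ideal.pow_le_pow_right (Nat.le_add_left m n) ha), add_zero]⟩
  smul_mem' := by
    rintro c x ⟨n, hn⟩
    exact ⟨n, fun a ha => by rw [smul_comm, hn a ha, smul_zero]⟩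

/-- `N` has finite flat dimension (characterized by uniform vanishing of `Tor`). -/
def HasFiniteFlatDim (R : Type u) [CommRing R] (N : Type u) [AddCommGroup N] [Module R N] : Prop :=
  ∃ n : ℕ, ∀ i : ℕ, n < i → ∀ (M : ModuleCat.{u} R), Subsingleton (torM R i ↥M N)

/-- `N` has finite injective dimension (characterized by uniform vanishing of `Ext`). -/
def HasFiniteInjDim (R : Type u) [CommRing R] (N : Type u) [AddCommGroup N] [Module R N] : Prop :=
  ∃ n : ℕ, ∀ i : ℕ, n < i → ∀ (M : ModuleCat.{u} R), Subsingleton (extM R i ↥M N)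

/-- `K` is a semidualizing `R`-module. -/
def IsSemidualizing (R : Type u) [CommRing R] (K : Type u) [AddCommGroup K] [Module R K] : Prop :=
  Module.Finite R K ∧ Function.Bijective (LinearMap.lsmul R K) ∧
    ∀ i : ℕ, 0 < i → Subsingleton (extM R i K K)

/-- The biduality map `M → Hom(Hom(M,K),K)`. -/
def evalK (R : Type u) [CommRing R] (K M : Type u) [AddCommGroup K] [Module R K]
    [AddCommGroup M] [Module R M] : M →ₗ[R] ((M →ₗ[R] K) →ₗ[R] K) :=
  LinearMap.applyₗ

/-- `M` has `G_K`-dimension zero. -/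
def IsGKDimZero (R : Type u) [CommRing R] (K M : Type u) [AddCommGroup K] [Module R K]
    [AddCommGroup M] [Module R M] : Prop :=
  Module.Finite R M ∧ Function.Bijective (evalK R K M) ∧
    (∀ i : ℕ, 0 < i → Subsingleton (extM R i M K)) ∧
    (∀ i : ℕ, 0 < i → Subsingleton (extM R i (M →ₗ[R] K) K))

/-- `M` admits a resolution of length `≤ n` by modules of `G_K`-dimension zero. -/
def GKDimLE (R : Type u) [CommRing R] (K : Type u) [AddCommGroup K] [Module R K] :
    ℕ → ModuleCat.{u} R → Prop
  | 0, M => IsGKDimZero R K ↥M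
  | n + 1, M =>
    ∃ (G : ModuleCat.{u} R) (f : ↥G →ₗ[R] ↥M), IsGKDimZero R K ↥G ∧ Function.Surjective f ∧
      GKDimLE R K n (ModuleCat.of R ↥(LinearMap.ker f))

/-- The `G_K`-dimension of `M`. -/
def GKDim (R : Type u) [CommRing R] (K M : Type u) [AddCommGroup K] [Module R K]
    [AddCommGroup M] [Module R M] : ℕ∞ :=
  sInf {n : ℕ∞ | ∃ k : ℕ, n = k ∧ GKDimLE R K k (ModuleCat.of R M)}

/-- The grade of a module, `gr_R(M) = grade(Ann_R(M), R) = inf{i | Ext^i(R/Ann M, R) ≠ 0}`. -/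
def grAnn (R : Type u) [CommRing R] (M : Type u) [AddCommGroup M] [Module R M] : ℕ∞ :=
  egrade R (R ⧸ Module.annihilator R M)

/-- The grade of an ideal, `grade(I) = inf{i | Ext^i(R/I, R) ≠ 0}`. -/
def gradeI (R : Type u) [CommRing R] (I : Ideal R) : ℕ∞ :=
  egrade R (R ⧸ I)

/-- The ideal `I` is `G_K`-Gorenstein: `R/I` is `G_K`-perfect and `Ext^{gr I}(R/I, K)` is
cyclic. -/
def IsGKGorensteinIdeal (R : Type u) [CommRing R] (K : Type u) [AddCommGroup K] [Module R K]
    (I : Ideal R) : Prop :=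
  ∃ n : ℕ, grAnn R (R ⧸ I) = (n : ℕ∞) ∧ GKDim R K (R ⧸ I) = (n : ℕ∞) ∧
    ∃ x : extM R n (R ⧸ I) K, Submodule.span R {x} = ⊤

end

/-!
Let `⋯ → P₁ → P₀ → M → 0` be a resolution by finitely generated projectives, and consider
`0 → λM → P₁* → P₂* → ⋯`, whose cohomology at `P_{i+1}*` is `Ext^{i+1}(M, R)`.

A module `X` of finite G-dimension over a Noetherian local ring `A` of depth `t` with residue
field `k` has G-dimension zero as soon as `Ext^i(X, A) = 0` for `0 < i ≤ t`. Indeed, evaluation is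
an isomorphism `Ext^t(k, D*) ≅ Hom(D, Ext^t(k, A))` for every finite `D` with
`Ext^{>0}(D, A) = 0`, so a map of modules of G-dimension zero which is injective on `Ext^t(k, -)`
has a surjective dual; this allows a resolution of `X` by such modules to be shortened step by step.

If `Ext^i(M, R) = 0` for `0 < i < n` and `Gdim M_p ≠ 0`, then `depth R_p ≥ n`, and counting depth
along the complex, exact before `P_n*`, gives `depth (λM)_p ≥ n`. Conversely, if `Ext^n(M, R)` is
the first nonzero one and `p` is an associated prime of it, then `coker (P_{n-1}* → P_n*)` has
depth zero at `p`, and the same count gives `depth (λM)_p ≤ n`.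
-/

universe u

section ExtGroups

variable {R : Type u} [CommRing R]
variable {M N X Y : Type u} [AddCommGroup M] [Module R M] [AddCommGroup N] [Module R N]
  [AddCommGroup X] [Module R X] [AddCommGroup Y] [Module R Y]

/-- `Ext^i_R(M, N)` as morphisms in the derived category. The proofs work with this model because
it carries the long exact sequences; `subsingleton_extM_iff` compares it with `extM`. -/
abbrev ExtGroup (R : Type u) [CommRing R] (i : ℕ) (M N : Type u) [AddCommGroup M] [Module R M]
    [AddCommGroup N] [Module R N] : Type u :=
  Abelian.Ext (ModuleCat.of R M) (ModuleCat.of R N) i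

lemma subsingleton_homology_zero_linearYonedaObj_iff {T Z : ModuleCat.{u} R}
    (Q : ProjectiveResolution T) :
    Subsingleton ((Q.complex.linearYonedaObj R Z).homology 0) ↔
      ∀ f : Q.complex.X 0 ⟶ Z, Q.complex.d 1 0 ≫ f = 0 → f = 0 := by
  rw [← ModuleCat.isZero_iff_subsingleton, ← HomologicalComplex.exactAt_iff_isZero_homology,
    HomologicalComplex.exactAt_iff' _ 0 0 1 (by simp) (by simp), ShortComplex.moduleCat_exact_iff]
  refine forall₂_congr fun f _ => ⟨?_, fun h => ⟨0, (map_zero _).trans h.symm⟩⟩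
  rintro ⟨g, rfl⟩
  have hd : Q.complex.d 0 0 = 0 := Q.complex.shape _ _ (by simp)
  exact (congrArg (· ≫ (show Q.complex.X 0 ⟶ Z from g)) hd).trans Limits.zero_comp

lemma subsingleton_homology_succ_linearYonedaObj_iff {T Z : ModuleCat.{u} R}
    (Q : ProjectiveResolution T) (n : ℕ) :
    Subsingleton ((Q.complex.linearYonedaObj R Z).homology (n + 1)) ↔
      ∀ f : Q.complex.X (n + 1) ⟶ Z, Q.complex.d (n + 2) (n + 1) ≫ f = 0 →
        ∃ g : Q.complex.X n ⟶ Z, Q.complex.d (n + 1) n ≫ g = f := by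
  rw [← ModuleCat.isZero_iff_subsingleton, ← HomologicalComplex.exactAt_iff_isZero_homology,
    HomologicalComplex.exactAt_iff' _ n (n + 1) (n + 2) (by simp) (by simp),
    ShortComplex.moduleCat_exact_iff]
  rfl

lemma subsingleton_extGroup_zero_iff :
    Subsingleton (ExtGroup R 0 M N) ↔ Subsingleton (M →ₗ[R] N) :=
  (Abelian.Ext.homEquiv₀.trans (ModuleCat.homEquiv (R := R))).subsingleton_congr

lemma subsingleton_extM_iff (i : ℕ) :
    Subsingleton (extM R i M N) ↔ Subsingleton (ExtGroup R i M N) := by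
  let Q := ProjectiveResolution.of (ModuleCat.of R M)
  rw [(Q.isoExt (R := R) i (ModuleCat.of R N)).toLinearEquiv.toEquiv.subsingleton_congr]
  cases i with
  | zero =>
    rw [subsingleton_homology_zero_linearYonedaObj_iff,
      Abelian.Ext.homEquiv₀.subsingleton_congr]
    refine ⟨fun h => subsingleton_of_forall_eq 0 fun g => ?_, fun h f hf => ?_⟩
    · have hcomp := (Q.complex_d_comp_π_f_zero_assoc g).trans Limits.zero_comp
      exact (cancel_epi (Q.π.f 0)).1 ((h _ hcomp).trans Limits.comp_zero.symm)
    · have hdesc : Q.exact₀.desc f hf = 0 := h.elim _ _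
      rw [← Q.exact₀.g_desc f hf, hdesc]
      exact Limits.comp_zero
  | succ n =>
    rw [subsingleton_homology_succ_linearYonedaObj_iff, subsingleton_iff_forall_eq 0]
    refine ⟨fun h x => ?_, fun h f hf => ?_⟩
    · obtain ⟨f, hf, rfl⟩ := Q.extMk_surjective x (n + 2) rfl
      exact (Q.extMk_eq_zero_iff f _ rfl hf n rfl).2 (h f hf)
    · exact (Q.extMk_eq_zero_iff f _ rfl hf n rfl).1 (h _)

/-- The map `Ext^i(Y, M) → Ext^i(Y, N)` induced by `f : M → N`, linear in `f` as well. -/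
noncomputable def extMap {i : ℕ} :
    (M →ₗ[R] N) →ₗ[R] ExtGroup R i Y M →ₗ[R] ExtGroup R i Y N :=
  (Abelian.Ext.bilinearCompOfLinear R (ModuleCat.of R Y) (ModuleCat.of R M) (ModuleCat.of R N)
      i 0 i (add_zero i)).flip ∘ₗ
    (Abelian.Ext.linearEquiv₀ (R := R)).symm.toLinearMap ∘ₗ
    (ModuleCat.homLinearEquiv (S := R) (M := ModuleCat.of R M)
      (N := ModuleCat.of R N)).symm.toLinearMap

lemma extMap_apply {i : ℕ} (f : M →ₗ[R] N) (x : ExtGroup R i Y M) :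
    extMap f x = x.comp (Abelian.Ext.mk₀ (ModuleCat.ofHom f)) (add_zero i) := rfl

@[simp]
lemma extMap_id {i : ℕ} :
    extMap (LinearMap.id : M →ₗ[R] M) = (LinearMap.id : ExtGroup R i Y M →ₗ[R] _) := by
  ext x
  simp [extMap_apply]

lemma extMap_comp {i : ℕ} (g : N →ₗ[R] X) (f : M →ₗ[R] N) :
    (extMap (g ∘ₗ f) : ExtGroup R i Y M →ₗ[R] _) = extMap g ∘ₗ extMap f := by
  ext x
  simp [extMap_apply, ModuleCat.ofHom_comp]

lemma extMap_extMap {i : ℕ} (g : N →ₗ[R] X) (f : M →ₗ[R] N) (x : ExtGroup R i Y M) :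
    extMap g (extMap f x) = extMap (g ∘ₗ f) x := by
  rw [extMap_comp, LinearMap.comp_apply]

lemma extGroup_smul_eq_zero {i : ℕ} {c : R} (hc : ∀ y : Y, c • y = 0) (x : ExtGroup R i Y M) :
    c • x = 0 := by
  have hid : c • 𝟙 (ModuleCat.of R Y) = 0 := by ext y; exact hc y
  calc c • x = (Abelian.Ext.mk₀ (c • 𝟙 (ModuleCat.of R Y))).comp x (zero_add i) := by
        simp [Abelian.Ext.mk₀_smul]
    _ = 0 := by simp [hid]

lemma extMap_linearEquiv_injective {i : ℕ} (e : M ≃ₗ[R] N) :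
    Function.Injective (extMap e.toLinearMap : ExtGroup R i Y M →ₗ[R] _) :=
  Function.LeftInverse.injective (g := extMap e.symm.toLinearMap) fun x => by
    rw [extMap_extMap, e.symm_comp, extMap_id, LinearMap.id_apply]

end ExtGroups

section ShortExact

variable {R : Type u} [CommRing R]
variable {K G X Y P : Type u} [AddCommGroup K] [Module R K] [AddCommGroup G] [Module R G]
  [AddCommGroup X] [Module R X] [AddCommGroup Y] [Module R Y] [AddCommGroup P] [Module R P]

/-- `0 → K → G → X → 0` is a short exact sequence of modules. -/
structure IsShortExact (f : K →ₗ[R] G) (g : G →ₗ[R] X) : Prop where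
  injective : Function.Injective f
  exact : Function.Exact f g
  surjective : Function.Surjective g

lemma isShortExact_ker_subtype {g : G →ₗ[R] X} (hg : Function.Surjective g) :
    IsShortExact (LinearMap.ker g).subtype g :=
  ⟨Subtype.val_injective, g.exact_subtype_ker_map, hg⟩

lemma isShortExact_subtype_mkQ (N : Submodule R G) : IsShortExact N.subtype N.mkQ :=
  ⟨Subtype.val_injective, LinearMap.exact_subtype_mkQ N, N.mkQ_surjective⟩

lemma isShortExact_range_subtype {f : K →ₗ[R] G} {g : G →ₗ[R] X} (h : Function.Exact f g) :
    IsShortExact (LinearMap.range f).subtype g.rangeRestrict :=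
  ⟨Subtype.val_injective, fun y => by simpa [Subtype.ext_iff] using h y,
    g.surjective_rangeRestrict⟩

namespace IsShortExact

variable {f : K →ₗ[R] G} {g : G →ₗ[R] X}

lemma shortExact (h : IsShortExact f g) :
    (ShortComplex.mk (ModuleCat.ofHom f) (ModuleCat.ofHom g)
      (ModuleCat.hom_ext h.exact.linearMap_comp_eq_zero)).ShortExact where
  exact := (ShortComplex.ShortExact.moduleCat_exact_iff_function_exact _).2 h.exact
  mono_f := (ModuleCat.mono_iff_injective _).2 h.injective
  epi_g := (ModuleCat.epi_iff_surjective _).2 h.surjective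

lemma contravariant_subsingleton₃ (h : IsShortExact f g) {i : ℕ}
    (hK : Subsingleton (ExtGroup R i K Y)) (hG : Subsingleton (ExtGroup R (i + 1) G Y)) :
    Subsingleton (ExtGroup R (i + 1) X Y) :=
  subsingleton_of_forall_eq 0 fun x => by
    obtain ⟨y, rfl⟩ := Abelian.Ext.contravariant_sequence_exact₃ h.shortExact _ x
      (hG.elim _ _) (add_comm 1 i)
    rw [hK.elim y 0, Abelian.Ext.comp_zero]

lemma contravariant_subsingleton₁ (h : IsShortExact f g) {i : ℕ}
    (hG : Subsingleton (ExtGroup R i G Y)) (hX : Subsingleton (ExtGroup R (i + 1) X Y)) :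
    Subsingleton (ExtGroup R i K Y) :=
  subsingleton_of_forall_eq 0 fun x => by
    obtain ⟨y, rfl⟩ := Abelian.Ext.contravariant_sequence_exact₁ h.shortExact _ x
      (add_comm 1 i) (hX.elim _ _)
    rw [hG.elim y 0, Abelian.Ext.comp_zero]

lemma lcomp_surjective (h : IsShortExact f g) (hX : Subsingleton (ExtGroup R 1 X Y)) :
    Function.Surjective (LinearMap.lcomp R Y f) := by
  intro φ
  obtain ⟨y, hy⟩ := Abelian.Ext.contravariant_sequence_exact₁ h.shortExact _
    (Abelian.Ext.mk₀ (ModuleCat.ofHom φ)) (add_comm 1 0) (hX.elim _ _)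
  obtain ⟨y, rfl⟩ := (Abelian.Ext.mk₀_bijective _ _).2 y
  rw [Abelian.Ext.mk₀_comp_mk₀] at hy
  exact ⟨y.hom, congrArg ModuleCat.Hom.hom ((Abelian.Ext.mk₀_bijective _ _).1 hy)⟩

lemma subsingleton_extGroup_one (h : IsShortExact f g) (hG : Subsingleton (ExtGroup R 1 G Y))
    (hf : Function.Surjective (LinearMap.lcomp R Y f)) : Subsingleton (ExtGroup R 1 X Y) :=
  subsingleton_of_forall_eq 0 fun x => by
    obtain ⟨y, rfl⟩ := Abelian.Ext.contravariant_sequence_exact₃ h.shortExact _ x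
      (hG.elim _ _) (add_comm 1 0)
    obtain ⟨y, rfl⟩ := (Abelian.Ext.mk₀_bijective _ _).2 y
    obtain ⟨ψ, hψ⟩ := hf y.hom
    have hy : y = ModuleCat.ofHom f ≫ ModuleCat.ofHom ψ := ModuleCat.hom_ext hψ.symm
    rw [hy, ← Abelian.Ext.mk₀_comp_mk₀, ShortComplex.ShortExact.extClass_comp_assoc]

lemma covariant_subsingleton₁ (h : IsShortExact f g) {i : ℕ}
    (hX : Subsingleton (ExtGroup R i Y X)) (hG : Subsingleton (ExtGroup R (i + 1) Y G)) :
    Subsingleton (ExtGroup R (i + 1) Y K) :=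
  subsingleton_of_forall_eq 0 fun x => by
    obtain ⟨y, rfl⟩ := Abelian.Ext.covariant_sequence_exact₁ _ h.shortExact x (hG.elim _ _) rfl
    rw [hX.elim y 0, Abelian.Ext.zero_comp]

lemma covariant_subsingleton₃ (h : IsShortExact f g) {i : ℕ}
    (hG : Subsingleton (ExtGroup R i Y G)) (hK : Subsingleton (ExtGroup R (i + 1) Y K)) :
    Subsingleton (ExtGroup R i Y X) :=
  subsingleton_of_forall_eq 0 fun x => by
    obtain ⟨y, rfl⟩ := Abelian.Ext.covariant_sequence_exact₃ _ h.shortExact x rfl (hK.elim _ _)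
    rw [hG.elim y 0, Abelian.Ext.zero_comp]

lemma exact_extMap (h : IsShortExact f g) (i : ℕ) :
    Function.Exact (extMap f : ExtGroup R i Y K →ₗ[R] _) (extMap g) := by
  intro x
  refine ⟨fun hx => Abelian.Ext.covariant_sequence_exact₂ _ h.shortExact x hx, ?_⟩
  rintro ⟨y, rfl⟩
  rw [extMap_extMap, h.exact.linearMap_comp_eq_zero, map_zero, LinearMap.zero_apply]

end IsShortExact

lemma extMap_injective_of_injective {f : K →ₗ[R] G} (hf : Function.Injective f) :
    Function.Injective (extMap f : ExtGroup R 0 Y K →ₗ[R] _) :=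
  have : Mono (ModuleCat.ofHom f) := (ModuleCat.mono_iff_injective _).2 hf
  Abelian.Ext.postcomp_mk₀_injective_of_mono _ (ModuleCat.ofHom f)

lemma subsingleton_extGroup_of_projective [Module.Projective R P] (i : ℕ) :
    Subsingleton (ExtGroup R (i + 1) P Y) :=
  subsingleton_of_forall_eq 0 Abelian.Ext.eq_zero_of_projective

/-- `Ext^j_R(Y, N) = 0` for all `j < n`: the grade of `Y` on `N` is at least `n`. -/
def ExtVanishBelow (R : Type u) [CommRing R] (n : ℕ) (Y N : Type u) [AddCommGroup Y] [Module R Y]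
    [AddCommGroup N] [Module R N] : Prop :=
  ∀ j < n, Subsingleton (ExtGroup R j Y N)

lemma ExtVanishBelow.mono {m n : ℕ} (h : ExtVanishBelow R n Y X) (hmn : m ≤ n) :
    ExtVanishBelow R m Y X :=
  fun j hj => h j (hj.trans_le hmn)

lemma IsShortExact.extVanishBelow₁ {f : K →ₗ[R] G} {g : G →ₗ[R] X} (h : IsShortExact f g)
    {m n : ℕ} (hX : ExtVanishBelow R n Y X) (hG : ExtVanishBelow R m Y G) (hmn : m ≤ n + 1) :
    ExtVanishBelow R m Y K
  | 0, h0 =>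
    have := hG 0 h0
    (extMap_injective_of_injective h.injective).subsingleton
  | j + 1, hj => h.covariant_subsingleton₁ (hX j (by lia)) (hG _ hj)

lemma IsShortExact.extMap_injective {f : K →ₗ[R] G} {g : G →ₗ[R] X} (h : IsShortExact f g) {n : ℕ}
    (hX : ExtVanishBelow R n Y X) : Function.Injective (extMap f : ExtGroup R n Y K →ₗ[R] _) := by
  cases n with
  | zero => exact extMap_injective_of_injective h.injective
  | succ i =>
    refine (injective_iff_map_eq_zero _).2 fun x hx => ?_
    obtain ⟨y, rfl⟩ := Abelian.Ext.covariant_sequence_exact₁ _ h.shortExact x hx rfl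
    rw [(hX i i.lt_succ_self).elim y 0, Abelian.Ext.zero_comp]

end ShortExact

section Duality

variable {A : Type u} [CommRing A]
variable {K G X Y P D E : Type u} [AddCommGroup K] [Module A K] [AddCommGroup G] [Module A G]
  [AddCommGroup X] [Module A X] [AddCommGroup Y] [Module A Y] [AddCommGroup P] [Module A P]
  [AddCommGroup D] [Module A D] [AddCommGroup E] [Module A E]

lemma exists_finite_dual_basis [Module.Finite A P] [Module.Projective A P] :
    ∃ (n : ℕ) (b : Fin n → P) (φ : Fin n → Module.Dual A P), ∀ q, ∑ j, φ j q • b j = q := by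
  obtain ⟨n, r, s, -, -, hrs⟩ := Module.Finite.exists_comp_eq_id_of_projective A P
  refine ⟨n, fun j => r (Pi.single j 1), fun j => LinearMap.proj j ∘ₗ s, fun q => ?_⟩
  calc ∑ j, s q j • r (Pi.single j 1) = r (s q) := by
        conv_rhs => rw [pi_eq_sum_univ' (s q), map_sum]
        simp only [map_smul]
    _ = q := LinearMap.congr_fun hrs q

lemma subsingleton_extGroup_of_finite_projective [Module.Finite A P] [Module.Projective A P]
    {i : ℕ} (h : Subsingleton (ExtGroup A i Y A)) : Subsingleton (ExtGroup A i Y P) := by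
  obtain ⟨n, b, φ, hbφ⟩ := exists_finite_dual_basis (A := A) (P := P)
  have hid : LinearMap.id = ∑ j, LinearMap.toSpanSingleton A P (b j) ∘ₗ φ j := by
    ext q
    simp [hbφ]
  refine subsingleton_of_forall_eq 0 fun x => ?_
  calc x = extMap LinearMap.id x := by rw [extMap_id, LinearMap.id_apply]
    _ = ∑ j, extMap (LinearMap.toSpanSingleton A P (b j)) (extMap (φ j) x) := by
      simp only [hid, map_sum, LinearMap.sum_apply, extMap_extMap]
    _ = 0 := Finset.sum_eq_zero fun j _ => by rw [h.elim (extMap (φ j) x) 0, map_zero]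

/-- `Ext^i_A(D, A) = 0` for all `i > 0`. -/
def ExtVanishPos (A D : Type u) [CommRing A] [AddCommGroup D] [Module A D] : Prop :=
  ∀ i : ℕ, Subsingleton (ExtGroup A (i + 1) D A)

lemma ExtVanishPos.of_projective [Module.Projective A P] : ExtVanishPos A P :=
  subsingleton_extGroup_of_projective

namespace IsShortExact

variable {f : K →ₗ[A] G} {g : G →ₗ[A] X}

lemma extVanishPos₁ (h : IsShortExact f g) (hG : ExtVanishPos A G) (hX : ExtVanishPos A X) :
    ExtVanishPos A K :=
  fun i => h.contravariant_subsingleton₁ (hG i) (hX (i + 1))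

lemma dualMap (h : IsShortExact f g) (hf : Function.Surjective f.dualMap) :
    IsShortExact g.dualMap f.dualMap :=
  ⟨LinearMap.dualMap_injective_of_surjective h.surjective,
    LinearMap.exact_lcomp_of_exact_of_surjective _ h.exact h.surjective, hf⟩

end IsShortExact

lemma exists_free_cover_with_dual_isShortExact [Module.Finite A D] (hD : ExtVanishPos A D) :
    ∃ (n : ℕ) (π : (Fin n → A) →ₗ[A] D), Function.Surjective π ∧
      ExtVanishPos A (LinearMap.ker π) ∧
      IsShortExact π.dualMap (LinearMap.ker π).subtype.dualMap := by
  obtain ⟨n, π, hπ⟩ := Module.Finite.exists_fin' A D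
  have hker := isShortExact_ker_subtype hπ
  exact ⟨n, π, hπ, hker.extVanishPos₁ .of_projective hD,
    hker.dualMap (hker.lcomp_surjective (hD 0))⟩

/-- The evaluation pairing `Ext^i(Y, D*) → Hom(D, Ext^i(Y, A))`. -/
noncomputable def extEval {i : ℕ} :
    ExtGroup A i Y (Module.Dual A D) →ₗ[A] D →ₗ[A] ExtGroup A i Y A :=
  (extMap ∘ₗ Module.Dual.eval A D).flip

lemma extEval_apply {i : ℕ} (x : ExtGroup A i Y (Module.Dual A D)) (d : D) :
    extEval x d = extMap (Module.Dual.eval A D d) x := rfl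

lemma extEval_extMap_dualMap {i : ℕ} (h : D →ₗ[A] E) (x : ExtGroup A i Y (Module.Dual A E)) :
    extEval (extMap h.dualMap x) = extEval x ∘ₗ h := by
  ext d
  rw [LinearMap.comp_apply, extEval_apply, extEval_apply, extMap_extMap]
  rfl

lemma extEval_bijective_of_projective [Module.Finite A P] [Module.Projective A P] (i : ℕ) :
    Function.Bijective (extEval : ExtGroup A i Y (Module.Dual A P) →ₗ[A] _) := by
  obtain ⟨n, b, φ, hbφ⟩ := exists_finite_dual_basis (A := A) (P := P)
  constructor
  · have hid : LinearMap.id = ∑ j, LinearMap.toSpanSingleton A (Module.Dual A P) (φ j) ∘ₗ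
        Module.Dual.eval A P (b j) := by
      ext ψ q
      conv_lhs => rw [← hbφ q]
      simp [mul_comm]
    refine (injective_iff_map_eq_zero _).2 fun x hx => ?_
    rw [← LinearMap.id_apply (R := A) x, ← extMap_id, hid]
    simp only [map_sum, LinearMap.sum_apply, ← extMap_extMap, ← extEval_apply, hx,
      LinearMap.zero_apply, map_zero, Finset.sum_const_zero]
  · intro θ
    refine ⟨∑ j, extMap (LinearMap.toSpanSingleton A _ (φ j)) (θ (b j)), ?_⟩
    ext q
    have heval (j) : Module.Dual.eval A P q ∘ₗ LinearMap.toSpanSingleton A _ (φ j) =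
        φ j q • LinearMap.id := by
      ext
      simp
    conv_rhs => rw [← hbφ q]
    simp only [map_sum, LinearMap.sum_apply, extEval_apply, extMap_extMap, heval, map_smul,
      extMap_id, LinearMap.smul_apply, LinearMap.id_apply]

variable [IsNoetherianRing A]

lemma ExtVanishBelow.dual {t : ℕ} (hY : ExtVanishBelow A t Y A) [Module.Finite A D]
    (hD : ExtVanishPos A D) : ExtVanishBelow A t Y (Module.Dual A D) := by
  induction t generalizing D with
  | zero => exact fun j hj => absurd hj j.not_lt_zero
  | succ t ih =>
    obtain ⟨n, π, -, hker, hdual⟩ := exists_free_cover_with_dual_isShortExact hD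
    exact hdual.extVanishBelow₁ (ih (hY.mono t.le_succ) hker)
      (fun j hj => subsingleton_extGroup_of_finite_projective (hY j hj)) le_rfl

lemma extEval_injective {t : ℕ} (hY : ExtVanishBelow A t Y A) [Module.Finite A D]
    (hD : ExtVanishPos A D) :
    Function.Injective (extEval : ExtGroup A t Y (Module.Dual A D) →ₗ[A] _) := by
  obtain ⟨n, π, -, hker, hdual⟩ := exists_free_cover_with_dual_isShortExact hD
  refine (injective_iff_map_eq_zero _).2 fun x hx => ?_
  have hfree : extEval (extMap π.dualMap x) = 0 := by
    rw [extEval_extMap_dualMap, hx, LinearMap.zero_comp]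
  have hzero : extMap π.dualMap x = 0 :=
    (injective_iff_map_eq_zero _).1 (extEval_bijective_of_projective t).1 _ hfree
  exact (injective_iff_map_eq_zero _).1 (hdual.extMap_injective (hY.dual hker)) x hzero

lemma extEval_surjective {t : ℕ} (hY : ExtVanishBelow A t Y A) [Module.Finite A D]
    (hD : ExtVanishPos A D) :
    Function.Surjective (extEval : ExtGroup A t Y (Module.Dual A D) →ₗ[A] _) := by
  intro φ
  obtain ⟨n, π, hπ, hker, hdual⟩ := exists_free_cover_with_dual_isShortExact hD
  obtain ⟨y, hy⟩ := (extEval_bijective_of_projective t).2 (φ ∘ₗ π)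
  have hker_zero : extMap (LinearMap.ker π).subtype.dualMap y = 0 := by
    refine (injective_iff_map_eq_zero _).1 (extEval_injective hY hker) _ ?_
    rw [extEval_extMap_dualMap, hy, LinearMap.comp_assoc, LinearMap.comp_ker_subtype,
      LinearMap.comp_zero]
  obtain ⟨x, rfl⟩ := (hdual.exact_extMap t y).1 hker_zero
  refine ⟨x, (LinearMap.cancel_right hπ).1 ?_⟩
  rw [← extEval_extMap_dualMap, hy]

end Duality

section GDimZero

variable {A : Type u} [CommRing A]
variable {M K G X Y : Type u} [AddCommGroup M] [Module A M] [AddCommGroup K] [Module A K]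
  [AddCommGroup G] [Module A G] [AddCommGroup X] [Module A X] [AddCommGroup Y] [Module A Y]

lemma extVanishPos_iff_forall_extM :
    ExtVanishPos A M ↔ ∀ i : ℕ, 0 < i → Subsingleton (extM A i M A) :=
  ⟨fun h i hi => (subsingleton_extM_iff i).2 (by simpa [Nat.sub_add_cancel hi] using h (i - 1)),
    fun h i => (subsingleton_extM_iff (i + 1)).1 (h _ i.succ_pos)⟩

lemma isGDimZero_iff :
    IsGDimZero A M ↔ Module.Finite A M ∧ Function.Bijective (Module.Dual.eval A M) ∧
      ExtVanishPos A M ∧ ExtVanishPos A (Module.Dual A M) := by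
  rw [extVanishPos_iff_forall_extM, extVanishPos_iff_forall_extM, IsGDimZero]

namespace IsGDimZero

lemma extVanishPos (h : IsGDimZero A M) : ExtVanishPos A M := (isGDimZero_iff.1 h).2.2.1

lemma extVanishPos_dual (h : IsGDimZero A M) : ExtVanishPos A (Module.Dual A M) :=
  (isGDimZero_iff.1 h).2.2.2

/-- The biduality isomorphism `M ≃ M**` of a module of G-dimension zero. -/
noncomputable def evalEquiv (h : IsGDimZero A M) :
    M ≃ₗ[A] Module.Dual A (Module.Dual A M) :=
  LinearEquiv.ofBijective (Module.Dual.eval A M) h.2.1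

end IsGDimZero

lemma IsShortExact.bijective_dual_eval₃ {f : K →ₗ[A] G} {g : G →ₗ[A] X} (h : IsShortExact f g)
    (hbidual : IsShortExact f.dualMap.dualMap g.dualMap.dualMap)
    (hK : Function.Bijective (Module.Dual.eval A K))
    (hG : Function.Bijective (Module.Dual.eval A G)) :
    Function.Bijective (Module.Dual.eval A X) := by
  have hnatural (y) : Module.Dual.eval A X (g y) = g.dualMap.dualMap (Module.Dual.eval A G y) := rfl
  constructor
  · refine (injective_iff_map_eq_zero _).2 fun x hx => ?_
    obtain ⟨y, rfl⟩ := h.surjective x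
    obtain ⟨z, hz⟩ := (hbidual.exact _).1 ((hnatural y).symm.trans hx)
    obtain ⟨w, rfl⟩ := hK.2 z
    rw [← hG.1 hz]
    exact h.exact.apply_apply_eq_zero w
  · intro z
    obtain ⟨w, rfl⟩ := hbidual.surjective z
    obtain ⟨y, rfl⟩ := hG.2 w
    exact ⟨g y, hnatural y⟩

lemma IsShortExact.isGDimZero₃ {f : K →ₗ[A] G} {g : G →ₗ[A] X} (h : IsShortExact f g)
    (hK : IsGDimZero A K) (hG : IsGDimZero A G) (hf : Function.Surjective f.dualMap) :
    IsGDimZero A X := by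
  have := hG.1
  have hdual := h.dualMap hf
  have hbidual := hdual.dualMap (hdual.lcomp_surjective (hK.extVanishPos_dual 0))
  refine isGDimZero_iff.2 ⟨Module.Finite.of_surjective g h.surjective,
    h.bijective_dual_eval₃ hbidual hK.2.1 hG.2.1, ?_,
    hdual.extVanishPos₁ hG.extVanishPos_dual hK.extVanishPos_dual⟩
  rintro (_ | i)
  · exact h.subsingleton_extGroup_one (hG.extVanishPos 0) hf
  · exact h.contravariant_subsingleton₃ (hK.extVanishPos i) (hG.extVanishPos (i + 1))

lemma IsGDimZero.extVanishBelow [IsNoetherianRing A] {t : ℕ} (hY : ExtVanishBelow A t Y A)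
    (hG : IsGDimZero A G) : ExtVanishBelow A t Y G := by
  have := hG.1
  intro j hj
  have := hY.dual hG.extVanishPos_dual j hj
  exact (extMap_linearEquiv_injective hG.evalEquiv).subsingleton

end GDimZero

section Local

open IsLocalRing

variable {A : Type u} [CommRing A] [IsLocalRing A]
variable {K G X D E : Type u} [AddCommGroup K] [Module A K] [AddCommGroup G] [Module A G]
  [AddCommGroup X] [Module A X] [AddCommGroup D] [Module A D] [AddCommGroup E] [Module A E]

lemma exists_linearMap_residueField_of_smul_eq_zero {v : E}
    (hv : ∀ c ∈ maximalIdeal A, c • v = 0) :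
    ∃ θ : (A ⧸ maximalIdeal A) →ₗ[A] E, θ 1 = v :=
  ⟨(maximalIdeal A).liftQ (LinearMap.toSpanSingleton A E v) fun c hc => by simpa using hv c hc,
    one_smul A v⟩

lemma exists_ne_zero_linearMap_le_ker [Module.Finite A D] {N : Submodule A D} (hN : N ≠ ⊤)
    {v : E} (hv : v ≠ 0) (hmv : ∀ c ∈ maximalIdeal A, c • v = 0) :
    ∃ φ : D →ₗ[A] E, φ ≠ 0 ∧ N ≤ LinearMap.ker φ := by
  obtain ⟨L, hL, hNL⟩ := (eq_top_or_exists_le_coatom N).resolve_left hN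
  obtain ⟨I, hI, ⟨e⟩⟩ := isSimpleModule_iff_quot_maximal.1 (isSimpleModule_iff_isCoatom.2 hL)
  obtain rfl := eq_maximalIdeal hI
  obtain ⟨θ, rfl⟩ := exists_linearMap_residueField_of_smul_eq_zero hmv
  refine ⟨θ ∘ₗ e.toLinearMap ∘ₗ L.mkQ, fun hzero => hv ?_, fun d hd => ?_⟩
  · obtain ⟨d, hd⟩ := (e.surjective.comp L.mkQ_surjective) 1
    rw [← hd]
    exact LinearMap.congr_fun hzero d
  · simp [(Submodule.Quotient.mk_eq_zero L).2 (hNL hd)]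

lemma smul_extGroup_residueField_eq_zero {i : ℕ} {c : A} (hc : c ∈ maximalIdeal A)
    (v : ExtGroup A i (A ⧸ maximalIdeal A) E) : c • v = 0 := by
  refine extGroup_smul_eq_zero (fun y => ?_) v
  obtain ⟨y, rfl⟩ := Ideal.Quotient.mk_surjective y
  exact (Submodule.Quotient.mk_eq_zero _).2 (Ideal.mul_mem_right y _ hc)

variable [IsNoetherianRing A]

lemma surjective_of_extMap_dualMap_injective {t : ℕ}
    (hbelow : ExtVanishBelow A t (A ⧸ maximalIdeal A) A)
    (hne : ¬ Subsingleton (ExtGroup A t (A ⧸ maximalIdeal A) A))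
    [Module.Finite A D] [Module.Finite A E] (hD : ExtVanishPos A D) (hE : ExtVanishPos A E)
    (h : D →ₗ[A] E)
    (hinj : Function.Injective
      (extMap h.dualMap : ExtGroup A t (A ⧸ maximalIdeal A) _ →ₗ[A] _)) :
    Function.Surjective h := by
  by_contra hsurj
  have := not_subsingleton_iff_nontrivial.1 hne
  obtain ⟨v, hv⟩ := exists_ne (0 : ExtGroup A t (A ⧸ maximalIdeal A) A)
  obtain ⟨φ, hφ, hker⟩ := exists_ne_zero_linearMap_le_ker
    (mt LinearMap.range_eq_top.1 hsurj) hv fun c hc => smul_extGroup_residueField_eq_zero hc v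
  obtain ⟨x, rfl⟩ := extEval_surjective hbelow hE φ
  have hx : extMap h.dualMap x = 0 := by
    refine (injective_iff_map_eq_zero _).1 (extEval_injective hbelow hD) _ ?_
    rw [extEval_extMap_dualMap]
    exact LinearMap.range_le_ker_iff.1 hker
  rw [(injective_iff_map_eq_zero _).1 hinj x hx, map_zero] at hφ
  exact hφ rfl

lemma IsGDimZero.dualMap_surjective_of_extMap_injective {t : ℕ}
    (hbelow : ExtVanishBelow A t (A ⧸ maximalIdeal A) A)
    (hne : ¬ Subsingleton (ExtGroup A t (A ⧸ maximalIdeal A) A))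
    (hK : IsGDimZero A K) (hG : IsGDimZero A G) {f : K →ₗ[A] G}
    (hinj : Function.Injective (extMap f : ExtGroup A t (A ⧸ maximalIdeal A) K →ₗ[A] _)) :
    Function.Surjective f.dualMap := by
  have := hK.1
  have := hG.1
  refine surjective_of_extMap_dualMap_injective hbelow hne hG.extVanishPos_dual
    hK.extVanishPos_dual f.dualMap ?_
  have hbidual : f.dualMap.dualMap =
      hG.evalEquiv.toLinearMap ∘ₗ f ∘ₗ hK.evalEquiv.symm.toLinearMap := by
    rw [← LinearMap.comp_assoc, LinearEquiv.eq_comp_toLinearMap_symm]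
    rfl
  rw [hbidual, extMap_comp, extMap_comp]
  exact (extMap_linearEquiv_injective _).comp (hinj.comp (extMap_linearEquiv_injective _))

lemma GDimLE.isGDimZero_of_extVanishBelow {t : ℕ}
    (hbelow : ExtVanishBelow A t (A ⧸ maximalIdeal A) A)
    (hne : ¬ Subsingleton (ExtGroup A t (A ⧸ maximalIdeal A) A)) {g s r : ℕ} {X : ModuleCat.{u} A}
    (hX : GDimLE A g X) (hsr : s + r = t) (hdepth : ExtVanishBelow A s (A ⧸ maximalIdeal A) X)
    (hext : ∀ i < r, Subsingleton (ExtGroup A (i + 1) X A)) : IsGDimZero A X := by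
  induction g generalizing X s r with
  | zero => exact hX
  | succ g ih =>
    obtain ⟨G, π, hG, hπ, hK⟩ := hX
    have hker := isShortExact_ker_subtype hπ
    have hGdepth := hG.extVanishBelow hbelow
    cases r with
    | zero =>
      obtain rfl : s = t := hsr
      have hKG := ih hK (add_zero s) (hker.extVanishBelow₁ hdepth hGdepth s.le_succ)
        fun i hi => absurd hi i.not_lt_zero
      exact hker.isGDimZero₃ hKG hG
        (hKG.dualMap_surjective_of_extMap_injective hbelow hne hG (hker.extMap_injective hdepth))
    | succ r =>
      have hKdepth := hker.extVanishBelow₁ hdepth (hGdepth.mono (m := s + 1) (by lia)) le_rfl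
      have hKG := ih hK (by lia : s + 1 + r = t) hKdepth fun i hi =>
        hker.contravariant_subsingleton₁ (hG.extVanishPos i) (hext (i + 1) (by lia))
      exact hker.isGDimZero₃ hKG hG (hker.lcomp_surjective (hext 0 r.succ_pos))

lemma GDimLE.extVanishBelow_residueField {g m : ℕ} (hX : GDimLE A g (ModuleCat.of A X))
    (hnonzero : ¬ IsGDimZero A X)
    (hext : ∀ i, i + 1 < m → Subsingleton (ExtGroup A (i + 1) X A)) :
    ExtVanishBelow A m (A ⧸ maximalIdeal A) A := by
  intro j
  induction j using Nat.strong_induction_on with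
  | _ j ih =>
    intro hj
    by_contra hne
    exact hnonzero (hX.isGDimZero_of_extVanishBelow (fun i hi => ih i hi (hi.trans hj)) hne
      (zero_add j) (fun _ h => absurd h (Nat.not_lt_zero _)) fun i hi => hext i (by lia))

end Local

section Complex

variable {A : Type u} [CommRing A] {Y : Type u} [AddCommGroup Y] [Module A Y]
  {D : ℕ → Type u} [∀ i, AddCommGroup (D i)] [∀ i, Module A (D i)] (δ : ∀ i, D i →ₗ[A] D (i + 1))

lemma extVanishBelow_range {m : ℕ} (hD : ∀ i, ExtVanishBelow A (m + 1) Y (D i))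
    (hδ : ∀ i < m, Function.Exact (δ i) (δ (i + 1))) :
    ExtVanishBelow A (m + 1) Y (LinearMap.range (δ 0)) := by
  induction m generalizing D with
  | zero =>
    exact (isShortExact_subtype_mkQ _).extVanishBelow₁
      (fun _ h => absurd h (Nat.not_lt_zero _)) (hD 1) le_rfl
  | succ m ih =>
    exact (isShortExact_range_subtype (hδ 0 m.succ_pos)).extVanishBelow₁
      (ih (fun i => δ (i + 1)) (fun i => (hD (i + 1)).mono (m + 1).le_succ)
        fun i hi => hδ (i + 1) (Nat.succ_lt_succ hi))
      (hD 1) le_rfl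

lemma subsingleton_extGroup_coker {m : ℕ} (hD : ∀ i, ExtVanishBelow A (m + 1) Y (D i))
    (hδ : ∀ i < m, Function.Exact (δ i) (δ (i + 1)))
    (hrange : Subsingleton (ExtGroup A (m + 1) Y (LinearMap.range (δ 0)))) :
    Subsingleton (ExtGroup A 0 Y (D (m + 1) ⧸ LinearMap.range (δ m))) := by
  induction m generalizing D with
  | zero => exact (isShortExact_subtype_mkQ _).covariant_subsingleton₃ (hD 1 0 one_pos) hrange
  | succ m ih =>
    exact ih (fun i => δ (i + 1)) (fun i => (hD (i + 1)).mono (m + 1).le_succ)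
      (fun i hi => hδ (i + 1) (Nat.succ_lt_succ hi))
      ((isShortExact_range_subtype (hδ 0 m.succ_pos)).covariant_subsingleton₃
        (hD 1 _ (m + 1).lt_succ_self) hrange)

end Complex

/-- A resolution `⋯ → P₁ → P₀ → M → 0` of `M` by finitely generated projective modules. -/
structure FinProjRes (R : Type u) [CommRing R] (M : Type u) [AddCommGroup M] [Module R M] where
  P : ℕ → ModuleCat.{u} R
  projective : ∀ i, Module.Projective R (P i)
  finite : ∀ i, Module.Finite R (P i)
  d : (i : ℕ) → P (i + 1) →ₗ[R] P i
  ε : P 0 →ₗ[R] M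
  surjective : Function.Surjective ε
  exact_zero : Function.Exact (d 0) ε
  exact_succ : ∀ i, Function.Exact (d (i + 1)) (d i)

attribute [instance] FinProjRes.projective FinProjRes.finite

/-- Forgets the minimality of a minimal projective resolution. -/
def MinRes.toFinProjRes {R M : Type u} [CommRing R] [AddCommGroup M] [Module R M]
    (F : MinRes R M) : FinProjRes R M where
  P := F.P
  projective := F.projective
  finite := F.finite
  d := F.d
  ε := F.ε
  surjective := F.surj
  exact_zero := LinearMap.exact_iff.2 F.exact0.symm
  exact_succ i := LinearMap.exact_iff.2 (F.exact i).symm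

namespace FinProjRes

variable {R M Y : Type u} [CommRing R] [AddCommGroup M] [Module R M] [AddCommGroup Y] [Module R Y]

/-- The tail `⋯ → P₂ → P₁` of a resolution, resolving the first syzygy `ker (P₀ → M)`. -/
def syzygy (F : FinProjRes R M) : FinProjRes R (LinearMap.ker F.ε) where
  P i := F.P (i + 1)
  projective i := F.projective (i + 1)
  finite i := F.finite (i + 1)
  d i := F.d (i + 1)
  ε := (F.d 0).codRestrict _ F.exact_zero.apply_apply_eq_zero
  surjective := fun ⟨y, hy⟩ => by
    obtain ⟨x, rfl⟩ := (F.exact_zero y).1 hy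
    exact ⟨x, rfl⟩
  exact_zero y := Subtype.ext_iff.trans (F.exact_succ 0 y)
  exact_succ i := F.exact_succ (i + 1)

lemma subsingleton_extGroup_iff (F : FinProjRes R M) (i : ℕ) :
    Subsingleton (ExtGroup R (i + 1) M Y) ↔
      Function.Exact (LinearMap.lcomp R Y (F.d i)) (LinearMap.lcomp R Y (F.d (i + 1))) := by
  induction i generalizing M with
  | zero =>
    have hker := isShortExact_ker_subtype F.surjective
    have hsyz : Function.Exact (LinearMap.lcomp R Y F.syzygy.ε) (LinearMap.lcomp R Y (F.d 1)) :=
      LinearMap.exact_lcomp_of_exact_of_surjective _ F.syzygy.exact_zero F.syzygy.surjective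
    have hcomp (φ : F.P 0 →ₗ[R] Y) : LinearMap.lcomp R Y (F.d 0) φ =
        LinearMap.lcomp R Y F.syzygy.ε (LinearMap.lcomp R Y (LinearMap.ker F.ε).subtype φ) := rfl
    constructor
    · intro h ψ
      rw [hsyz ψ]
      constructor
      · rintro ⟨θ, rfl⟩
        obtain ⟨φ, rfl⟩ := hker.lcomp_surjective h θ
        exact ⟨φ, hcomp φ⟩
      · rintro ⟨φ, rfl⟩
        exact ⟨_, (hcomp φ).symm⟩
    · refine fun h => hker.subsingleton_extGroup_one (subsingleton_extGroup_of_projective 0) ?_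
      intro θ
      obtain ⟨φ, hφ⟩ := (h _).1 (hsyz.apply_apply_eq_zero θ)
      exact ⟨φ, (LinearMap.cancel_right F.syzygy.surjective).1 hφ⟩
  | succ i ih =>
    have hker := isShortExact_ker_subtype F.surjective
    have hshift : Subsingleton (ExtGroup R (i + 2) M Y) ↔
        Subsingleton (ExtGroup R (i + 1) (LinearMap.ker F.ε) Y) :=
      ⟨hker.contravariant_subsingleton₁ (subsingleton_extGroup_of_projective i),
        fun h => hker.contravariant_subsingleton₃ h (subsingleton_extGroup_of_projective (i + 1))⟩
    exact hshift.trans (ih F.syzygy)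

lemma range_dualMap_le_ker (F : FinProjRes R M) (i : ℕ) :
    LinearMap.range (F.d i).dualMap ≤ LinearMap.ker (F.d (i + 1)).dualMap := by
  rintro _ ⟨φ, rfl⟩
  ext x
  exact (congrArg φ ((F.exact_succ i).apply_apply_eq_zero x)).trans (map_zero φ)

end FinProjRes

section LocalizedMap

variable {R A : Type u} [CommRing R] [CommRing A] [Algebra R A]
variable {M₀ M₁ M₂ L₀ L₁ L₂ : Type u}
  [AddCommGroup M₀] [Module R M₀] [AddCommGroup M₁] [Module R M₁] [AddCommGroup M₂] [Module R M₂]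
  [AddCommGroup L₀] [Module R L₀] [Module A L₀] [AddCommGroup L₁] [Module R L₁] [Module A L₁]
  [AddCommGroup L₂] [Module R L₂] [Module A L₂]
  {f₀ : M₀ →ₗ[R] L₀} {f₁ : M₁ →ₗ[R] L₁} {f₂ : M₂ →ₗ[R] L₂}

/-- `h'` is the map induced by `h` along the localization maps `f₀` and `f₁`, expressed by
commutativity of the square so that different models of a localized module can be used. -/
def IsLocalizedMap (f₀ : M₀ →ₗ[R] L₀) (f₁ : M₁ →ₗ[R] L₁) (h : M₀ →ₗ[R] M₁)
    (h' : L₀ →ₗ[A] L₁) : Prop :=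
  ∀ x, h' (f₀ x) = f₁ (h x)

variable (S : Submonoid R) [IsScalarTower R A L₀] [IsScalarTower R A L₁] [IsScalarTower R A L₂]
  [IsLocalizedModule S f₀] [IsLocalizedModule S f₁] [IsLocalizedModule S f₂]

include S in
lemma IsLocalizedMap.unique {h : M₀ →ₗ[R] M₁} {h' h'' : L₀ →ₗ[A] L₁}
    (hh : IsLocalizedMap f₀ f₁ h h') (hh' : IsLocalizedMap f₀ f₁ h h'') : h' = h'' := by
  refine LinearMap.restrictScalars_injective R (IsLocalizedModule.linearMap_ext S f₀ f₁ ?_)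
  ext x
  exact (hh x).trans (hh' x).symm

variable [IsLocalization S A]

lemma isLocalizedMap_mapExtendScalars (h : M₀ →ₗ[R] M₁) :
    IsLocalizedMap f₀ f₁ h (IsLocalizedModule.mapExtendScalars S f₀ f₁ A h) := by
  intro x
  simp

namespace IsLocalizedMap

variable {h : M₀ →ₗ[R] M₁} {h' : L₀ →ₗ[A] L₁} {k : M₁ →ₗ[R] M₂} {k' : L₁ →ₗ[A] L₂}

lemma eq_mapExtendScalars (hh : IsLocalizedMap f₀ f₁ h h') :
    h' = IsLocalizedModule.mapExtendScalars S f₀ f₁ A h :=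
  hh.unique S (isLocalizedMap_mapExtendScalars S h)

include S

lemma injective (hh : IsLocalizedMap f₀ f₁ h h') (hinj : Function.Injective h) :
    Function.Injective h' := by
  rw [hh.eq_mapExtendScalars S]
  exact IsLocalizedModule.map_injective S f₀ f₁ h hinj

lemma surjective (hh : IsLocalizedMap f₀ f₁ h h') (hsurj : Function.Surjective h) :
    Function.Surjective h' := by
  rw [hh.eq_mapExtendScalars S]
  exact IsLocalizedModule.map_surjective S f₀ f₁ h hsurj

lemma exact (hh : IsLocalizedMap f₀ f₁ h h') (kk : IsLocalizedMap f₁ f₂ k k')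
    (hexact : Function.Exact h k) : Function.Exact h' k' := by
  rw [hh.eq_mapExtendScalars S, kk.eq_mapExtendScalars S]
  exact IsLocalizedModule.map_exact S f₀ f₁ f₂ h k hexact

lemma ker_eq (hh : IsLocalizedMap f₀ f₁ h h') :
    LinearMap.ker h' = (LinearMap.ker h).localized' A S f₀ := by
  rw [hh.eq_mapExtendScalars S, LinearMap.localized'_ker_eq_ker_localizedMap A S f₀ f₁]
  rfl

lemma range_eq (hh : IsLocalizedMap f₀ f₁ h h') :
    LinearMap.range h' = (LinearMap.range h).localized' A S f₁ := by
  rw [hh.eq_mapExtendScalars S, LinearMap.localized'_range_eq_range_localizedMap A S f₀ f₁]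
  rfl

lemma exists_isLocalizedModule_ker (hh : IsLocalizedMap f₀ f₁ h h') :
    ∃ f : LinearMap.ker h →ₗ[R] LinearMap.ker h', IsLocalizedModule S f ∧
      IsLocalizedMap f f₀ (LinearMap.ker h).subtype (LinearMap.ker h').subtype := by
  rw [hh.ker_eq S]
  exact ⟨Submodule.toLocalized' A S f₀ _, inferInstance, fun _ => rfl⟩

lemma exists_isLocalizedModule_coker (hh : IsLocalizedMap f₀ f₁ h h') :
    ∃ f : (M₁ ⧸ LinearMap.range h) →ₗ[R] L₁ ⧸ LinearMap.range h', IsLocalizedModule S f ∧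
      ∀ x, f (Submodule.Quotient.mk x) = Submodule.Quotient.mk (f₁ x) := by
  rw [hh.range_eq S]
  exact ⟨Submodule.toLocalizedQuotient' A S f₁ _, inferInstance, fun _ => rfl⟩

lemma nonempty_linearEquiv_range (hh : IsLocalizedMap f₀ f₁ h h')
    (f : LinearMap.range h →ₗ[R] L₂) [IsLocalizedModule S f] :
    Nonempty (L₂ ≃ₗ[A] LinearMap.range h') := by
  rw [hh.range_eq S]
  have := IsLocalization.linearMap_compatibleSMul (M := S) (S := A)
  exact ⟨(IsLocalizedModule.linearEquiv S f (Submodule.toLocalized' A S f₁ _)).restrictScalars A⟩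

end IsLocalizedMap

variable (A) in
/-- The localization map `M* → (S⁻¹M)*`, induced by the localization map `f₀ : M → S⁻¹M`. -/
noncomputable def dualLocalization (f₀ : M₀ →ₗ[R] L₀) [IsLocalizedModule S f₀] :
    Module.Dual R M₀ →ₗ[R] Module.Dual A L₀ :=
  IsLocalizedModule.mapExtendScalars S f₀ (Algebra.linearMap R A) A

instance [IsNoetherianRing R] [Module.Finite R M₀] :
    IsLocalizedModule S (dualLocalization A S f₀) :=
  have := Module.finitePresentation_of_finite R M₀
  Module.FinitePresentation.isLocalizedModule_mapExtendScalars S f₀ _ _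

lemma isLocalizedMap_dualLocalization (φ : Module.Dual R M₀) :
    IsLocalizedMap f₀ (Algebra.linearMap R A) φ (dualLocalization A S f₀ φ) :=
  isLocalizedMap_mapExtendScalars S φ

lemma IsLocalizedMap.dualMap {h : M₀ →ₗ[R] M₁} {h' : L₀ →ₗ[A] L₁}
    (hh : IsLocalizedMap f₀ f₁ h h') :
    IsLocalizedMap (dualLocalization A S f₁) (dualLocalization A S f₀) h.dualMap h'.dualMap := by
  refine fun φ => unique S (fun x => ?_) (isLocalizedMap_dualLocalization S (h.dualMap φ))
  exact (congrArg _ (hh x)).trans (isLocalizedMap_dualLocalization S φ (h x))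

lemma isLocalizedMap_dual_eval [IsNoetherianRing R] [Module.Finite R M₀] :
    IsLocalizedMap f₀ (dualLocalization A S (dualLocalization A S f₀))
      (Module.Dual.eval R M₀) (Module.Dual.eval A L₀) :=
  fun x => IsLocalizedMap.unique S (fun φ => isLocalizedMap_dualLocalization S φ x)
    (isLocalizedMap_dualLocalization S (Module.Dual.eval R M₀ x))

end LocalizedMap

section LocalizeGDim

variable {R A : Type u} [CommRing R] [CommRing A] [Algebra R A] (S : Submonoid R)
  [IsLocalization S A] [IsNoetherianRing R]
variable {M L : Type u} [AddCommGroup M] [Module R M] [AddCommGroup L] [Module R L] [Module A L]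
  [IsScalarTower R A L] (f : M →ₗ[R] L) [IsLocalizedModule S f]

include S f in
lemma subsingleton_extGroup_localize [Module.Finite R M] {i : ℕ}
    (h : Subsingleton (ExtGroup R (i + 1) M R)) : Subsingleton (ExtGroup A (i + 1) L A) := by
  induction i using Nat.strong_induction_on generalizing M L with
  | _ i ih =>
    obtain ⟨n, π, hπ⟩ := Module.Finite.exists_fin' R M
    let free : (Fin n → R) →ₗ[R] Fin n → A := .pi fun j => Algebra.linearMap R A ∘ₗ .proj j
    have hπ' : IsLocalizedMap free f π (IsLocalizedModule.mapExtendScalars S free f A π) :=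
      isLocalizedMap_mapExtendScalars S π
    obtain ⟨fker, _, hsub⟩ := hπ'.exists_isLocalizedModule_ker S
    have hker := isShortExact_ker_subtype hπ
    have hker' := isShortExact_ker_subtype (hπ'.surjective S hπ)
    cases i with
    | zero =>
      exact hker'.subsingleton_extGroup_one (subsingleton_extGroup_of_projective 0)
        ((hsub.dualMap S).surjective S (hker.lcomp_surjective h))
    | succ i =>
      exact hker'.contravariant_subsingleton₃
        (ih i i.lt_succ_self fker
          (hker.contravariant_subsingleton₁ (subsingleton_extGroup_of_projective i) h))
        (subsingleton_extGroup_of_projective (i + 1))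

include S f in
lemma IsGDimZero.localize (h : IsGDimZero R M) : IsGDimZero A L := by
  have := h.1
  have heval := isLocalizedMap_dual_eval (A := A) (f₀ := f) S
  exact isGDimZero_iff.2 ⟨Module.Finite.of_isLocalizedModule S f,
    ⟨heval.injective S h.2.1.1, heval.surjective S h.2.1.2⟩,
    fun i => subsingleton_extGroup_localize S f (h.extVanishPos i),
    fun i => subsingleton_extGroup_localize S (dualLocalization A S f) (h.extVanishPos_dual i)⟩

include S f in
lemma GDimLE.localize {g : ℕ} (h : GDimLE R g (ModuleCat.of R M)) :
    GDimLE A g (ModuleCat.of A L) := by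
  induction g generalizing M L with
  | zero => exact IsGDimZero.localize S f h
  | succ g ih =>
    obtain ⟨G, π, hG, hπ, hK⟩ := h
    let := LocalizedModule.moduleOfIsLocalization (S := S) (M := G) (T := A)
    let mk := LocalizedModule.mkLinearMap S G
    have hπ' : IsLocalizedMap mk f π (IsLocalizedModule.mapExtendScalars S mk f A π) :=
      isLocalizedMap_mapExtendScalars S π
    obtain ⟨fker, _, -⟩ := hπ'.exists_isLocalizedModule_ker S
    exact ⟨ModuleCat.of A (LocalizedModule S G), _, IsGDimZero.localize S mk hG,
      hπ'.surjective S hπ, ih fker hK⟩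

end LocalizeGDim

section Cohomology

open LinearMap (range ker)

section

variable {R M₀ M₁ M₂ : Type u} [CommRing R] [AddCommGroup M₀] [Module R M₀] [AddCommGroup M₁]
  [Module R M₁] [AddCommGroup M₂] [Module R M₂] {h : M₀ →ₗ[R] M₁} {k : M₁ →ₗ[R] M₂}

lemma subsingleton_ker_liftQ_range_iff (hle : range h ≤ ker k) :
    Subsingleton (ker ((range h).liftQ k hle)) ↔ Function.Exact h k := by
  rw [Submodule.subsingleton_iff_eq_bot, Submodule.ker_liftQ, ← le_bot_iff,
    Submodule.map_le_iff_le_comap, ← LinearMap.ker, Submodule.ker_mkQ, LinearMap.exact_iff]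
  exact ⟨fun h => h.antisymm hle, le_of_eq⟩

lemma not_subsingleton_extGroup_zero_of_isAssociatedPrime [IsNoetherianRing R] {I : Ideal R}
    (hI : IsAssociatedPrime I M₀) : ¬Subsingleton (ExtGroup R 0 (R ⧸ I) M₀) := by
  obtain ⟨hprime, θ, hθ⟩ := (isAssociatedPrime_iff_exists_injective_linearMap I M₀).1 hI
  rw [subsingleton_extGroup_zero_iff]
  intro hsub
  exact one_ne_zero (hθ ((LinearMap.congr_fun (hsub.elim θ 0) 1).trans (map_zero θ).symm))

end

variable {R A : Type u} [CommRing R] [CommRing A] [Algebra R A] (S : Submonoid R)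
  [IsLocalization S A]
variable {M₀ M₁ M₂ L₀ L₁ L₂ : Type u}
  [AddCommGroup M₀] [Module R M₀] [AddCommGroup M₁] [Module R M₁] [AddCommGroup M₂] [Module R M₂]
  [AddCommGroup L₀] [Module R L₀] [Module A L₀] [IsScalarTower R A L₀]
  [AddCommGroup L₁] [Module R L₁] [Module A L₁] [IsScalarTower R A L₁]
  [AddCommGroup L₂] [Module R L₂] [Module A L₂] [IsScalarTower R A L₂]
  {f₀ : M₀ →ₗ[R] L₀} [IsLocalizedModule S f₀] {f₁ : M₁ →ₗ[R] L₁} [IsLocalizedModule S f₁]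
  {f₂ : M₂ →ₗ[R] L₂} [IsLocalizedModule S f₂]
  {h : M₀ →ₗ[R] M₁} {h' : L₀ →ₗ[A] L₁} {k : M₁ →ₗ[R] M₂} {k' : L₁ →ₗ[A] L₂}

include S in
lemma IsLocalizedMap.exists_isLocalizedModule_cohomology (hh : IsLocalizedMap f₀ f₁ h h')
    (kk : IsLocalizedMap f₁ f₂ k k') (hle : range h ≤ ker k) (hle' : range h' ≤ ker k') :
    ∃ f : ker ((range h).liftQ k hle) →ₗ[R] ker ((range h').liftQ k' hle'),
      IsLocalizedModule S f := by
  obtain ⟨f, _, hf⟩ := hh.exists_isLocalizedModule_coker S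
  have hlift : IsLocalizedMap f f₂ ((range h).liftQ k hle) ((range h').liftQ k' hle') := by
    intro x
    obtain ⟨y, rfl⟩ := Submodule.Quotient.mk_surjective _ x
    rw [hf]
    exact kk y
  obtain ⟨g, hg, -⟩ := hlift.exists_isLocalizedModule_ker S
  exact ⟨g, hg⟩

open IsLocalRing Module.associatedPrimes in
lemma IsLocalizedMap.isAssociatedPrime_cohomology {p : Ideal R} [p.IsPrime]
    [IsLocalization.AtPrime A p] [IsLocalRing A] [IsLocalizedModule p.primeCompl f₀]
    [IsLocalizedModule p.primeCompl f₁] [IsLocalizedModule p.primeCompl f₂]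
    (hh : IsLocalizedMap f₀ f₁ h h') (kk : IsLocalizedMap f₁ f₂ k k')
    (hle : range h ≤ ker k) (hle' : range h' ≤ ker k')
    (hp : IsAssociatedPrime p (ker ((range h).liftQ k hle))) :
    IsAssociatedPrime (maximalIdeal A) (ker ((range h').liftQ k' hle')) := by
  obtain ⟨f, _⟩ := hh.exists_isLocalizedModule_cohomology p.primeCompl kk hle hle'
  refine mem_associatedPrimes_of_comap_mem_associatedPrimes_of_isLocalizedModule p.primeCompl f _ ?_
  rwa [← Ideal.under_def, IsLocalization.AtPrime.under_maximalIdeal A p]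

end Cohomology

namespace FinProjRes

variable {R M : Type u} [CommRing R] [AddCommGroup M] [Module R M] (F : FinProjRes R M)
  (S : Submonoid R)

/-- The module `λM = Ω Tr M`, as the image of `P₀* → P₁*`. The resolution need not be minimal, so
this determines `λM` only up to projective summands. -/
def lambdaMod : Type u := LinearMap.range (F.d 0).dualMap

instance : AddCommGroup F.lambdaMod :=
  inferInstanceAs (AddCommGroup (LinearMap.range (F.d 0).dualMap))

instance : Module R F.lambdaMod :=
  inferInstanceAs (Module R (LinearMap.range (F.d 0).dualMap))

/-- The differential of the localized resolution. -/
noncomputable def localizedD (i : ℕ) :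
    LocalizedModule S (F.P (i + 1)) →ₗ[Localization S] LocalizedModule S (F.P i) :=
  IsLocalizedModule.mapExtendScalars S (LocalizedModule.mkLinearMap S _)
    (LocalizedModule.mkLinearMap S _) (Localization S) (F.d i)

lemma isLocalizedMap_localizedD (i : ℕ) :
    IsLocalizedMap (LocalizedModule.mkLinearMap S _) (LocalizedModule.mkLinearMap S _) (F.d i)
      (F.localizedD S i) :=
  isLocalizedMap_mapExtendScalars S (F.d i)

instance (i : ℕ) : Module.Finite (Localization S) (LocalizedModule S (F.P i)) :=
  Module.Finite.of_isLocalizedModule S (LocalizedModule.mkLinearMap S (F.P i))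

instance (i : ℕ) : Module.Projective (Localization S) (LocalizedModule S (F.P i)) :=
  Module.projective_of_isLocalizedModule S (LocalizedModule.mkLinearMap S (F.P i))

/-- The localization of a resolution of `M`, resolving `S⁻¹M`. -/
noncomputable def localize : FinProjRes (Localization S) (LocalizedModule S M) where
  P i := ModuleCat.of _ (LocalizedModule S (F.P i))
  projective _ := inferInstance
  finite _ := inferInstance
  d := F.localizedD S
  ε := IsLocalizedModule.mapExtendScalars S (LocalizedModule.mkLinearMap S _)
    (LocalizedModule.mkLinearMap S _) (Localization S) F.ε
  surjective := (isLocalizedMap_mapExtendScalars S F.ε).surjective S F.surjective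
  exact_zero := (F.isLocalizedMap_localizedD S 0).exact S (isLocalizedMap_mapExtendScalars S F.ε)
    F.exact_zero
  exact_succ i := (F.isLocalizedMap_localizedD S (i + 1)).exact S (F.isLocalizedMap_localizedD S i)
    (F.exact_succ i)

include F in
lemma module_finite : Module.Finite R M := .of_surjective F.ε F.surjective

/-- The cohomology `Ext^{i+1}(M, R)` of the dual complex `P₀* → P₁* → ⋯` at `P_{i+1}*`, as a
submodule of the cokernel of `P_i* → P_{i+1}*`. -/
abbrev dualCohomology (i : ℕ) :
    Submodule R (Module.Dual R (F.P (i + 1)) ⧸ LinearMap.range (F.d i).dualMap) :=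
  LinearMap.ker ((LinearMap.range (F.d i).dualMap).liftQ (F.d (i + 1)).dualMap
    (F.range_dualMap_le_ker i))

lemma subsingleton_dualCohomology_iff (i : ℕ) :
    Subsingleton (F.dualCohomology i) ↔ Subsingleton (ExtGroup R (i + 1) M R) :=
  (subsingleton_ker_liftQ_range_iff _).trans (F.subsingleton_extGroup_iff i).symm

variable {Y : Type u} [AddCommGroup Y] [Module (Localization S) Y] {m : ℕ}

lemma extVanishBelow_localize_dual (hY : ExtVanishBelow (Localization S) m Y (Localization S))
    (i : ℕ) : ExtVanishBelow (Localization S) m Y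
      (Module.Dual (Localization S) (LocalizedModule S (F.P i))) :=
  fun j hj => subsingleton_extGroup_of_finite_projective (hY j hj)

variable [IsNoetherianRing R]

lemma exact_dualMap_localizedD {i : ℕ} (h : Subsingleton (ExtGroup R (i + 1) M R)) :
    Function.Exact (F.localizedD S i).dualMap (F.localizedD S (i + 1)).dualMap :=
  have := F.module_finite
  ((F.localize S).subsingleton_extGroup_iff i).1
    (subsingleton_extGroup_localize S (LocalizedModule.mkLinearMap S M) h)

lemma isAssociatedPrime_maximalIdeal_dualCohomology_localize {p : Ideal R} [p.IsPrime] (i : ℕ)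
    (hp : IsAssociatedPrime p (F.dualCohomology i)) :
    IsAssociatedPrime (IsLocalRing.maximalIdeal (Localization.AtPrime p))
      ((F.localize p.primeCompl).dualCohomology i) :=
  ((F.isLocalizedMap_localizedD p.primeCompl i).dualMap p.primeCompl).isAssociatedPrime_cohomology
    ((F.isLocalizedMap_localizedD p.primeCompl (i + 1)).dualMap p.primeCompl)
    (F.range_dualMap_le_ker i) ((F.localize p.primeCompl).range_dualMap_le_ker i) hp

lemma nonempty_localizedModule_lambdaMod_equiv :
    Nonempty (LocalizedModule S F.lambdaMod ≃ₗ[Localization S]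
      LinearMap.range (F.localizedD S 0).dualMap) := by
  let f : LinearMap.range (F.d 0).dualMap →ₗ[R] LocalizedModule S F.lambdaMod :=
    LocalizedModule.mkLinearMap S F.lambdaMod
  have : IsLocalizedModule S f :=
    inferInstanceAs (IsLocalizedModule S (LocalizedModule.mkLinearMap S F.lambdaMod))
  exact ((F.isLocalizedMap_localizedD S 0).dualMap S).nonempty_linearEquiv_range S f

lemma extVanishBelow_localize_lambdaMod
    (hM : ∀ i, i + 1 < m → Subsingleton (ExtGroup R (i + 1) M R))
    (hY : ExtVanishBelow (Localization S) m Y (Localization S)) :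
    ExtVanishBelow (Localization S) m Y (LocalizedModule S F.lambdaMod) := by
  obtain ⟨e⟩ := F.nonempty_localizedModule_lambdaMod_equiv S
  cases m with
  | zero => exact fun _ h => absurd h (Nat.not_lt_zero _)
  | succ m =>
    have hrange := extVanishBelow_range (fun i => (F.localizedD S i).dualMap)
      (F.extVanishBelow_localize_dual S hY)
      fun i hi => F.exact_dualMap_localizedD S (hM i (Nat.succ_lt_succ hi))
    intro j hj
    have := hrange j hj
    exact (extMap_linearEquiv_injective (N := LinearMap.range (F.localizedD S 0).dualMap)
      e).subsingleton

lemma subsingleton_extGroup_coker_localize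
    (hM : ∀ i < m, Subsingleton (ExtGroup R (i + 1) M R))
    (hY : ExtVanishBelow (Localization S) (m + 1) Y (Localization S))
    (hlambda : Subsingleton (ExtGroup (Localization S) (m + 1) Y
      (LocalizedModule S F.lambdaMod))) :
    Subsingleton (ExtGroup (Localization S) 0 Y
      (Module.Dual (Localization S) (LocalizedModule S (F.P (m + 1))) ⧸
        LinearMap.range (F.localizedD S m).dualMap)) := by
  obtain ⟨e⟩ := F.nonempty_localizedModule_lambdaMod_equiv S
  exact subsingleton_extGroup_coker (fun i => (F.localizedD S i).dualMap)
    (F.extVanishBelow_localize_dual S hY) (fun i hi => F.exact_dualMap_localizedD S (hM i hi))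
    (extMap_linearEquiv_injective e.symm).subsingleton

end FinProjRes

section Invariants

variable {R M : Type u} [CommRing R] [AddCommGroup M] [Module R M]

lemma gDim_eq_zero_iff : GDim R M = 0 ↔ IsGDimZero R M := by
  rw [GDim, ENat.sInf_eq_zero]
  constructor
  · rintro ⟨k, hk, h⟩
    obtain rfl : k = 0 := by exact_mod_cast hk.symm
    exact h
  · exact fun h => ⟨0, Nat.cast_zero.symm, h⟩

lemma exists_gDimLE_of_gDim_lt_top (h : GDim R M < ⊤) :
    ∃ g : ℕ, GDimLE R g (ModuleCat.of R M) := by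
  obtain ⟨_, ⟨g, -, hg⟩, -⟩ := sInf_lt_iff.1 h
  exact ⟨g, hg⟩

lemma natCast_le_rgr_iff {n : ℕ} :
    n ≤ rgr R M ↔ ∀ i, i + 1 < n → Subsingleton (ExtGroup R (i + 1) M R) := by
  simp only [rgr, le_sInf_iff, Set.mem_ofPred_eq, ← subsingleton_extM_iff]
  constructor
  · intro h i hi
    by_contra hne
    exact hi.not_ge (by exact_mod_cast h _ ⟨i + 1, rfl, i.succ_pos, hne⟩)
  · rintro h _ ⟨k, rfl, hk, hne⟩
    obtain ⟨i, rfl⟩ := Nat.exists_eq_succ_of_ne_zero hk.ne'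
    by_contra! hlt
    exact hne (h i (by exact_mod_cast hlt))

lemma natCast_le_edepth_iff {I : Ideal R} {n : ℕ} :
    n ≤ edepth R I M ↔ ExtVanishBelow R n (R ⧸ I) M := by
  simp only [edepth, le_sInf_iff, Set.mem_ofPred_eq, ExtVanishBelow, ← subsingleton_extM_iff]
  constructor
  · intro h i hi
    by_contra hne
    exact hi.not_ge (by exact_mod_cast h _ ⟨i, rfl, hne⟩)
  · rintro h _ ⟨k, rfl, hne⟩
    by_contra! hlt
    exact hne (h k (by exact_mod_cast hlt))

end Invariants

section ReducedGrade

open IsLocalRing (maximalIdeal)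

variable {R M : Type u} [CommRing R] [IsNoetherianRing R] [AddCommGroup M] [Module R M]

lemma extVanishBelow_residueField_of_locGDim_ne_zero [Module.Finite R M] {m : ℕ}
    (hfin : GDim R M < ⊤) (p : Ideal R) [p.IsPrime] (hp : locGDim R p M ≠ 0)
    (hM : ∀ i, i + 1 < m → Subsingleton (ExtGroup R (i + 1) M R)) :
    ExtVanishBelow (Localization.AtPrime p) m
      (Localization.AtPrime p ⧸ maximalIdeal (Localization.AtPrime p))
      (Localization.AtPrime p) := by
  have : IsNoetherianRing (Localization.AtPrime p) :=
    IsLocalization.isNoetherianRing p.primeCompl _ inferInstance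
  obtain ⟨g, hg⟩ := exists_gDimLE_of_gDim_lt_top hfin
  let f := LocalizedModule.mkLinearMap p.primeCompl M
  exact (hg.localize p.primeCompl f).extVanishBelow_residueField
    (fun h => hp (gDim_eq_zero_iff.2 h))
    fun i hi => subsingleton_extGroup_localize p.primeCompl f (hM i hi)

namespace FinProjRes

variable (F : FinProjRes R M)

lemma rgr_le_locDepth_lambdaMod (hfin : GDim R M < ⊤) (p : Ideal R) [p.IsPrime]
    (hp : locGDim R p M ≠ 0) : rgr R M ≤ locDepth R p F.lambdaMod := by
  have := F.module_finite
  refine ENat.forall_natCast_le_iff_le.1 fun n hn => natCast_le_edepth_iff.2 ?_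
  have hM := natCast_le_rgr_iff.1 hn
  exact F.extVanishBelow_localize_lambdaMod p.primeCompl hM
    (extVanishBelow_residueField_of_locGDim_ne_zero hfin p hp hM)

lemma exists_prime_not_subsingleton_extGroup_lambdaMod (hfin : GDim R M < ⊤) {m : ℕ}
    (hM : ∀ i < m, Subsingleton (ExtGroup R (i + 1) M R))
    (hm : ¬Subsingleton (ExtGroup R (m + 1) M R)) :
    ∃ (p : Ideal R) (_ : p.IsPrime), locGDim R p M ≠ 0 ∧
      ¬Subsingleton (ExtGroup (Localization.AtPrime p) (m + 1)
        (Localization.AtPrime p ⧸ maximalIdeal (Localization.AtPrime p))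
        (LocalizedModule p.primeCompl F.lambdaMod)) := by
  have := F.module_finite
  have hnontrivial : Nontrivial (F.dualCohomology m) := by
    rwa [← not_subsingleton_iff_nontrivial, F.subsingleton_dualCohomology_iff]
  obtain ⟨p, hp⟩ := associatedPrimes.nonempty R (F.dualCohomology m)
  have hprime : p.IsPrime := hp.isPrime
  have hass := F.isAssociatedPrime_maximalIdeal_dualCohomology_localize m hp
  have : IsNoetherianRing (Localization.AtPrime p) :=
    IsLocalization.isNoetherianRing p.primeCompl _ inferInstance
  have hGDim : locGDim R p M ≠ 0 := fun hzero => by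
    have := ((F.localize p.primeCompl).subsingleton_dualCohomology_iff m).2
      ((gDim_eq_zero_iff.1 hzero).extVanishPos m)
    exact not_isAssociatedPrime_of_subsingleton hass
  refine ⟨p, hprime, hGDim, fun hlambda => ?_⟩
  refine not_subsingleton_extGroup_zero_of_isAssociatedPrime
    (hass.map_of_injective _ (Submodule.subtype_injective _))
    (F.subsingleton_extGroup_coker_localize p.primeCompl hM ?_ hlambda)
  exact extVanishBelow_residueField_of_locGDim_ne_zero hfin p hGDim
    fun i hi => hM i (Nat.succ_lt_succ_iff.1 hi)

end FinProjRes

theorem stmt2_general (F : FinProjRes R M) (hfin : GDim R M < ⊤) :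
    rgr R M = sInf {n : ℕ∞ | ∃ (p : Ideal R) (h : p.IsPrime), haveI := h;
      locGDim R p M ≠ 0 ∧ n = locDepth R p F.lambdaMod} := by
  refine le_antisymm (le_sInf ?_) (ENat.forall_natCast_le_iff_le.1 fun n hn => ?_)
  · rintro _ ⟨p, _, hp, rfl⟩
    exact F.rgr_le_locDepth_lambdaMod hfin p hp
  · refine natCast_le_rgr_iff.2 fun i => ?_
    induction i using Nat.strong_induction_on with
    | _ m hM =>
      intro hmn
      by_contra hm
      obtain ⟨p, hprime, hp, hlambda⟩ := F.exists_prime_not_subsingleton_extGroup_lambdaMod hfin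
        (fun i hi => hM i hi ((Nat.succ_lt_succ hi).trans hmn)) hm
      exact hlambda (natCast_le_edepth_iff.1 (hn.trans (sInf_le ⟨p, hprime, hp, rfl⟩)) _ hmn)

end ReducedGrade

section Statements

variable (R : Type u) [CommRing R] [IsNoetherianRing R]

theorem stmt2 (M : Type u) [AddCommGroup M] [Module R M] [Module.Finite R M]
    (F : MinRes R M) (hHL : IsHorizontallyLinked R M) (hfin : GDim R M < ⊤) :
    rgr R M = sInf {n : ℕ∞ | ∃ (p : Ideal R) (h : p.IsPrime), haveI := h;
      locGDim R p M ≠ 0 ∧ n = locDepth R p F.lambdaMod} :=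
  stmt2_general F.toFinProjRes hfin

end Statements
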